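/- Let A be a finite alphabet and let P be the element of the incidence algebra I(A*) over ℚ defined by P(u,v) = binom(v,u). Then P is invertible in I(A*) and its inverse satisfies P^{−1}(u,v) = (−1)^{|v|−|u|} · binom(v,u) for all u ≤ v. Equivalently, for all words u ≤ v, ∑_{u ≤ w ≤ v} (−1)^{|u|+|w|} · binom(w,u) · binom(v,w) = δ(u,v), where δ(u,v) = 1 if u = v and 0 otherwise. -/

import Mathlib

/-- `subwordCount v u` is the number of occurrences of `u` as a (scattered) subword of `v`,
i.e. the number of strictly increasing maps `φ` from the positions of `u` to the positions of
`v` matching the letters. -/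
def subwordCount {A : Type*} [DecidableEq A] (v u : List A) : ℕ :=
  ((Finset.univ : Finset (Fin u.length → Fin v.length)).filter
    (fun φ => (∀ i j : Fin u.length, i < j → φ i < φ j) ∧
      ∀ i : Fin u.length, u.get i = v.get (φ i))).card

/-- The identity `δ` of the incidence algebra `I(A*)` over `ℚ`. -/
def deltaW {A : Type*} [DecidableEq A] (u v : List A) : ℚ := if u = v then 1 else 0

/-- Convolution in the incidence algebra `I(A*)` of words under the subword order:
`(FG)(u,v) = ∑_{u ≤ z ≤ v} F(u,z)·G(z,v)`.  The words `z` with `u ≤ z ≤ v` are exactly the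
sublists `z` of `v` with `subwordCount z u > 0`. -/
def convW {A : Type*} [DecidableEq A] (F G : List A → List A → ℚ) (u v : List A) : ℚ :=
  ∑ z ∈ v.sublists.toFinset.filter (fun z => 0 < subwordCount z u), F u z * G z v

/-- Convolution powers, with `F ^ 0 = δ`. -/
def convPowW {A : Type*} [DecidableEq A] (F : List A → List A → ℚ) :
    ℕ → List A → List A → ℚ
  | 0 => deltaW
  | ℓ + 1 => convW F (convPowW F ℓ)

/-- The element `H` of `I(A*)`: `H(u,v) = binom(v,u)` if `|v| = |u| + 1`, else `0`. -/
def HW {A : Type*} [DecidableEq A] (u v : List A) : ℚ :=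
  if v.length = u.length + 1 then (subwordCount v u : ℚ) else 0

/-- The element `P` of `I(A*)`: `P(u,v) = binom(v,u)`. -/
def PW {A : Type*} [DecidableEq A] (u v : List A) : ℚ := subwordCount v u

/-- The claimed inverse of `P`: `P⁻¹(u,v) = (−1)^{|v|−|u|} · binom(v,u)`. -/
def PWinv {A : Type*} [DecidableEq A] (u v : List A) : ℚ :=
  (-1 : ℚ) ^ (v.length - u.length) * subwordCount v u

/-!
Put `W t u v = t ^ (|v| - |u|) * binom(v, u)`. Then `W` is a one-parameter group in the incidence
algebra, `W s * W t = W (s + t)`, with `W 1 = P`, `W 0 = δ` and `W (-1)` the claimed inverse.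

For the group law, `binom(v, w)` is the multiplicity of `w` in the list of all `2 ^ |v|` subwords of
`v`, so that the convolution becomes a sum over this list. It is evaluated by induction on `v`: for
the word `b :: v`, the subwords that skip the letter `b` contribute `t * W (s + t) u v`, and those
that use it contribute `s * W (s + t) u v`, plus `W (s + t) u' v` if `u = b :: u'`. The total
satisfies the recursion of `W (s + t)`.
-/

section Occurrences

variable {α : Type*} {m n : ℕ}

/-- The occurrences of the word `f` as a subword of the word `g`, as a set of maps between the
positions. Words are functions on `Fin` here, so that the first letter can be split off with the
`Fin.cons` API. -/
def occurrences (f : Fin n → α) (g : Fin m → α) : Set (Fin n → Fin m) :=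
  {φ | StrictMono φ ∧ ∀ i, f i = g (φ i)}

lemma strictMono_succ_comp {φ : Fin n → Fin m} : StrictMono (Fin.succ ∘ φ) ↔ StrictMono φ := by
  simp only [StrictMono, Function.comp_apply, Fin.succ_lt_succ_iff]

lemma succ_comp_mem_occurrences {f : Fin n → α} {g : Fin (m + 1) → α} {φ : Fin n → Fin m} :
    Fin.succ ∘ φ ∈ occurrences f g ↔ φ ∈ occurrences f (Fin.tail g) :=
  and_congr_left' strictMono_succ_comp

lemma cons_zero_succ_comp_mem_occurrences {f : Fin (n + 1) → α} {g : Fin (m + 1) → α}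
    {φ : Fin n → Fin m} :
    (Fin.cons 0 (Fin.succ ∘ φ) : Fin (n + 1) → Fin (m + 1)) ∈ occurrences f g ↔
      f 0 = g 0 ∧ φ ∈ occurrences (Fin.tail f) (Fin.tail g) := by
  simp only [occurrences, Set.mem_ofPred_eq, Fin.strictMono_cons, strictMono_succ_comp,
    Fin.forall_fin_succ, Function.comp_apply, Fin.succ_pos, implies_true, true_and, Fin.cons_zero,
    Fin.cons_succ, Fin.tail, and_left_comm]

lemma exists_eq_succ_comp {φ : Fin n → Fin (m + 1)} (h : ∀ i, φ i ≠ 0) :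
    ∃ ψ : Fin n → Fin m, φ = Fin.succ ∘ ψ :=
  ⟨fun i ↦ (φ i).pred (h i), by ext; simp⟩

lemma occurrences_sdiff_apply_zero (f : Fin (n + 1) → α) (g : Fin (m + 1) → α) :
    occurrences f g \ {φ | φ 0 = 0} = (Fin.succ ∘ ·) '' occurrences f (Fin.tail g) := by
  ext φ
  constructor
  · rintro ⟨hφ, h0 : φ 0 ≠ 0⟩
    have hne (i) : φ i ≠ 0 :=
      ((Fin.pos_of_ne_zero h0).trans_le (hφ.1.monotone (Fin.zero_le i))).ne'
    obtain ⟨ψ, rfl⟩ := exists_eq_succ_comp hne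
    exact ⟨ψ, succ_comp_mem_occurrences.1 hφ, rfl⟩
  · rintro ⟨ψ, hψ, rfl⟩
    exact ⟨succ_comp_mem_occurrences.2 hψ, Fin.succ_ne_zero _⟩

lemma occurrences_inter_apply_zero (f : Fin (n + 1) → α) (g : Fin (m + 1) → α) :
    occurrences f g ∩ {φ | φ 0 = 0} =
      (fun φ ↦ Fin.cons 0 (Fin.succ ∘ φ)) ''
        {φ | f 0 = g 0 ∧ φ ∈ occurrences (Fin.tail f) (Fin.tail g)} := by
  ext φ
  constructor
  · rintro ⟨hφ, h0 : φ 0 = 0⟩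
    have hne (i) : Fin.tail φ i ≠ 0 := ((Fin.zero_le _).trans_lt (hφ.1 (Fin.succ_pos i))).ne'
    obtain ⟨ψ, hψ⟩ := exists_eq_succ_comp hne
    obtain rfl : Fin.cons 0 (Fin.succ ∘ ψ) = φ := by rw [← hψ, ← h0, Fin.cons_self_tail]
    exact ⟨ψ, cons_zero_succ_comp_mem_occurrences.1 hφ, rfl⟩
  · rintro ⟨ψ, hψ, rfl⟩
    exact ⟨cons_zero_succ_comp_mem_occurrences.2 hψ, Fin.cons_zero _ _⟩

lemma ncard_occurrences_succ [DecidableEq α] (f : Fin (n + 1) → α) (g : Fin (m + 1) → α) :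
    (occurrences f g).ncard = (occurrences f (Fin.tail g)).ncard +
      if f 0 = g 0 then (occurrences (Fin.tail f) (Fin.tail g)).ncard else 0 := by
  have succ_comp_injective (k : ℕ) :
      Function.Injective fun φ : Fin k → Fin m ↦ Fin.succ ∘ φ :=
    (Fin.succ_injective m).comp_left
  have cons_injective : Function.Injective fun φ : Fin n → Fin m ↦
      (Fin.cons 0 (Fin.succ ∘ φ) : Fin (n + 1) → Fin (m + 1)) :=
    (Fin.cons_right_injective _).comp (succ_comp_injective n)
  rw [← Set.ncard_inter_add_ncard_sdiff_eq_ncard _ {φ | φ 0 = 0}, add_comm,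
    occurrences_sdiff_apply_zero, occurrences_inter_apply_zero,
    Set.ncard_image_of_injective _ (succ_comp_injective _),
    Set.ncard_image_of_injective _ cons_injective]
  split_ifs with h <;> simp [h]

end Occurrences

section SubwordCount

variable {A : Type*} [DecidableEq A]

lemma subwordCount_eq_ncard_occurrences (v u : List A) :
    subwordCount v u = (occurrences u.get v.get).ncard := by
  rw [subwordCount, ← Set.ncard_coe_finset, Finset.coe_filter_univ]
  rfl

@[simp]
lemma subwordCount_nil_right (v : List A) : subwordCount v [] = 1 := by
  simp [subwordCount]

@[simp]
lemma subwordCount_nil_cons (a : A) (u : List A) : subwordCount [] (a :: u) = 0 := by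
  simp [subwordCount]

lemma subwordCount_cons_cons (a b : A) (u v : List A) :
    subwordCount (b :: v) (a :: u) =
      subwordCount v (a :: u) + if a = b then subwordCount v u else 0 := by
  simp only [subwordCount_eq_ncard_occurrences]
  exact ncard_occurrences_succ (a :: u).get (b :: v).get

lemma count_sublists' {_ : BEq (List A)} [LawfulBEq (List A)] (u v : List A) :
    v.sublists'.count u = subwordCount v u := by
  induction v generalizing u with
  | nil => cases u <;> simp
  | cons b v ih =>
    rw [List.sublists'_cons, List.count_append, ih]
    cases u with
    | nil => simp [List.count_eq_zero]
    | cons a u =>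
      rw [subwordCount_cons_cons]
      split_ifs with hab
      · rw [hab, List.count_map_of_injective _ _ List.cons_injective, ih]
      · simp [List.count_eq_zero, Ne.symm hab]

lemma subwordCount_pos_iff_sublist {u v : List A} : 0 < subwordCount v u ↔ u.Sublist v := by
  rw [← List.mem_sublists', ← List.count_pos_iff, count_sublists']

lemma subwordCount_eq_zero_of_length_lt {u v : List A} (h : v.length < u.length) :
    subwordCount v u = 0 :=
  Nat.eq_zero_of_not_pos fun hpos ↦ (subwordCount_pos_iff_sublist.1 hpos).length_le.not_gt h

end SubwordCount

section SubwordWeight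

variable {A R : Type*} [DecidableEq A] [CommSemiring R]

/-- The one-parameter family `t ^ (|v| - |u|) * binom(v, u)` of elements of the incidence algebra
of `A*`, which interpolates between `δ` at `t = 0`, `P` at `t = 1` and `P⁻¹` at `t = -1`. The
truncated subtraction is harmless, as `binom(v, u) = 0` for `|v| < |u|`. -/
def subwordWeight (t : R) (u v : List A) : R :=
  t ^ (v.length - u.length) * subwordCount v u

@[simp]
lemma subwordWeight_nil_nil (t : R) : subwordWeight t ([] : List A) [] = 1 := by
  simp [subwordWeight]

@[simp]
lemma subwordWeight_cons_nil (t : R) (a : A) (u : List A) : subwordWeight t (a :: u) [] = 0 := by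
  simp [subwordWeight]

lemma subwordWeight_nil_cons (t : R) (b : A) (v : List A) :
    subwordWeight t [] (b :: v) = t * subwordWeight t [] v := by
  simp [subwordWeight, pow_succ']

lemma subwordWeight_cons_cons (t : R) (a b : A) (u v : List A) :
    subwordWeight t (a :: u) (b :: v) =
      t * subwordWeight t (a :: u) v + if a = b then subwordWeight t u v else 0 := by
  have skip : t ^ (v.length - u.length) * (subwordCount v (a :: u) : R) =
      t * subwordWeight t (a :: u) v := by
    rcases Nat.lt_or_ge v.length (a :: u).length with hlt | hle
    · simp [subwordWeight, subwordCount_eq_zero_of_length_lt hlt]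
    · have hlen : v.length - u.length = v.length - (a :: u).length + 1 := by
        rw [List.length_cons] at hle ⊢
        lia
      rw [subwordWeight, hlen, pow_succ', mul_assoc]
  rw [← skip, subwordWeight, subwordWeight, subwordCount_cons_cons, List.length_cons,
    List.length_cons, Nat.add_sub_add_right, Nat.cast_add, mul_add]
  split_ifs <;> simp

lemma sum_sublists'_subwordWeight_mul_pow (s t : R) (u v : List A) :
    (v.sublists'.map fun w ↦ subwordWeight s u w * t ^ (v.length - w.length)).sum =
      subwordWeight (s + t) u v := by
  induction v generalizing u with
  | nil => cases u <;> simp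
  | cons b v ih =>
    have skip : (v.sublists'.map fun w ↦
        subwordWeight s u w * t ^ ((b :: v).length - w.length)).sum =
          t * subwordWeight (s + t) u v := by
      rw [← ih, ← List.sum_map_mul_left]
      refine congrArg List.sum (List.map_congr_left fun w hw ↦ ?_)
      rw [List.length_cons, Nat.sub_add_comm (List.mem_sublists'.1 hw).length_le, pow_succ']
      ring
    rw [List.sublists'_cons, List.map_append, List.sum_append, skip, List.map_map]
    simp only [Function.comp_def, List.length_cons, Nat.add_sub_add_right]
    cases u with
    | nil =>
      simp only [subwordWeight_nil_cons, mul_assoc, List.sum_map_mul_left, ih]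
      ring
    | cons a u =>
      simp only [subwordWeight_cons_cons, add_mul, List.sum_map_add, mul_assoc,
        List.sum_map_mul_left, ih]
      split_ifs
      · rw [ih]
        ring
      · simp only [zero_mul, List.sum_map_zero]
        ring

lemma subwordWeight_zero (u v : List A) : subwordWeight (0 : ℚ) u v = deltaW u v := by
  induction v generalizing u with
  | nil => cases u <;> simp [deltaW]
  | cons b v ih =>
    cases u with
    | nil => simp [subwordWeight_nil_cons, deltaW]
    | cons a u => simp [subwordWeight_cons_cons, ih, deltaW, ite_and]

lemma subwordWeight_one : subwordWeight (1 : ℚ) = PW (A := A) := by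
  ext u v
  simp [subwordWeight, PW]

lemma subwordWeight_neg_one : subwordWeight (-1 : ℚ) = PWinv (A := A) := rfl

lemma convW_subwordWeight (s t : ℚ) (u v : List A) :
    convW (subwordWeight s) (subwordWeight t) u v = subwordWeight (s + t) u v := by
  have support : ∀ w ∈ v.sublists.toFinset,
      subwordWeight s u w * subwordWeight t w v ≠ 0 → 0 < subwordCount w u := by
    intro w _ hw
    refine Nat.pos_of_ne_zero fun hzero ↦ hw ?_
    simp [subwordWeight, hzero]
  rw [convW, Finset.sum_filter_of_ne support, ← sum_sublists'_subwordWeight_mul_pow,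
    Finset.sum_list_map_count, List.toFinset_eq_of_perm _ _ v.sublists_perm_sublists']
  refine Finset.sum_congr rfl fun w _ ↦ ?_
  rw [count_sublists', nsmul_eq_mul, subwordWeight.eq_def t]
  ring

end SubwordWeight

section Inverse

variable {A : Type*} [DecidableEq A]

lemma convW_PW_PWinv (u v : List A) : convW PW PWinv u v = deltaW u v := by
  rw [← subwordWeight_one, ← subwordWeight_neg_one, convW_subwordWeight, add_neg_cancel,
    subwordWeight_zero]

lemma convW_PWinv_PW (u v : List A) : convW PWinv PW u v = deltaW u v := by
  rw [← subwordWeight_one, ← subwordWeight_neg_one, convW_subwordWeight, neg_add_cancel,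
    subwordWeight_zero]

lemma sum_neg_one_pow_eq_convW_PWinv_PW (u v : List A) :
    ∑ w ∈ v.sublists.toFinset.filter (fun w => 0 < subwordCount w u),
      (-1 : ℚ) ^ (u.length + w.length) * subwordCount w u * subwordCount v w =
    convW PWinv PW u v := by
  refine Finset.sum_congr rfl fun w hw ↦ ?_
  have hle : u.length ≤ w.length :=
    (subwordCount_pos_iff_sublist.1 (Finset.mem_filter.1 hw).2).length_le
  have hsign : (-1 : ℚ) ^ (u.length + w.length) = (-1) ^ (w.length - u.length) :=
    neg_one_pow_congr ((Nat.even_add.trans iff_comm).trans (Nat.even_sub hle).symm)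
  rw [hsign, PWinv, PW]

theorem PW_inverse_general :
    (∀ u v : List A, convW PW PWinv u v = deltaW u v) ∧
    (∀ u v : List A, convW PWinv PW u v = deltaW u v) ∧
    (∀ u v : List A,
      ∑ w ∈ v.sublists.toFinset.filter (fun w => 0 < subwordCount w u),
        (-1 : ℚ) ^ (u.length + w.length) * subwordCount w u * subwordCount v w
      = deltaW u v) :=
  ⟨convW_PW_PWinv, convW_PWinv_PW, fun u v ↦
    (sum_neg_one_pow_eq_convW_PWinv_PW u v).trans (convW_PWinv_PW u v)⟩

end Inverse

/-- `P` is invertible in `I(A*)` with two-sided inverse `P⁻¹(u,v) = (−1)^{|v|−|u|}·binom(v,u)`;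
equivalently, `∑_{u ≤ w ≤ v} (−1)^{|u|+|w|} · binom(w,u) · binom(v,w) = δ(u,v)`. -/
theorem PW_inverse {A : Type*} [Fintype A] [DecidableEq A] :
    (∀ u v : List A, convW PW PWinv u v = deltaW u v) ∧
    (∀ u v : List A, convW PWinv PW u v = deltaW u v) ∧
    (∀ u v : List A,
      ∑ w ∈ v.sublists.toFinset.filter (fun w => 0 < subwordCount w u),
        (-1 : ℚ) ^ (u.length + w.length) * subwordCount w u * subwordCount v w
      = deltaW u v) :=
  PW_inverse_general
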